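/- Let S = (S, I, O, G, D, h) be a weakly-complete deterministic TFSM with output delays all of whose guards are half-open intervals [u,v) with integers 0 ≤ u < v. Then for every state s and every timed input sequence α: α ∈ Dom_S(s) if and only if the untimed projection [α]_{I_G} is defined and belongs to Dom_{R(S)}(s); moreover, in that case next_state_S(s,α) = next_state_{R(S)}(s,[α]_{I_G}). -/

import Mathlib

/-!
A refined guard `[p, q)` of `Ḡ_i` contains no boundary point in its interior, so if it meets a
guard `[u, v)` labeled `i` then `u ≤ p` and `q ≤ v`, i.e. it is contained in it
(`guardSub_of_mem`). Hence, once the projection of a timed sequence is given, a transition can be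
taken in the TFSM at a given step iff its copy can be taken in the region FSM, and the two
machines reach the same states (`reaches_iff_of_projects`). A timestamp lying in some guard
labeled `i` lies between the last boundary point before it and the first one after it, so a timed
sequence inducing a run has a projection (`exists_projects_of_run`).
-/


/-- A timed guard: an interval with natural-number endpoints, left-closed, and
either right-open (`rightClosed = false`, i.e. `[lo, hi)`) or right-closed
(`rightClosed = true`, i.e. `[lo, hi]`; point intervals are `[u,u]`). -/
structure Guard where
  lo : ℕ
  hi : ℕ
  rightClosed : Bool
deriving DecidableEq

/-- Membership of a timestamp in a guard. -/
def GuardMem (g : Guard) (t : ℝ) : Prop :=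
  (g.lo : ℝ) ≤ t ∧ (if g.rightClosed then t ≤ (g.hi : ℝ) else t < (g.hi : ℝ))

/-- Guard inclusion (as sets of timestamps). -/
def GuardSub (g g' : Guard) : Prop := ∀ t : ℝ, GuardMem g t → GuardMem g' t

/-- A transition of a TFSM with output delays: source state, input, timed guard,
output, positive integer output delay, destination state. -/
structure TTrans (S I O : Type) where
  src : S
  inp : I
  guard : Guard
  out : O
  delay : ℕ+
  dst : S

/-- A TFSM with output delays over states `S`, inputs `I`, outputs `O`,
given by its transition relation. -/
abbrev TFSM (S I O : Type) := Set (TTrans S I O)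

variable {S I O A B : Type}

/-- Determinism: any two distinct transitions from the same state on the same input
have disjoint guards. -/
def TFSMDeterministic (M : TFSM S I O) : Prop :=
  ∀ tr ∈ M, ∀ tr' ∈ M, tr.src = tr'.src → tr.inp = tr'.inp → tr ≠ tr' →
    ∀ t : ℝ, ¬ (GuardMem tr.guard t ∧ GuardMem tr'.guard t)

/-- A timed input sequence: nonnegative, nondecreasing timestamps. -/
def IsTimedInputSeq (α : List (I × ℝ)) : Prop :=
  (∀ p ∈ α, 0 ≤ p.2) ∧ List.Chain' (· ≤ ·) (α.map Prod.snd)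

/-- `TRunTo M s t0 α trs sf`: starting at state `s` at time `t0`, the timed input
sequence `α` induces the sequence of transitions `trs`, ending at state `sf`. -/
inductive TRunTo (M : TFSM S I O) : S → ℝ → List (I × ℝ) → List (TTrans S I O) → S → Prop
  | nil (s : S) (t0 : ℝ) : TRunTo M s t0 [] [] s
  | cons {s sf : S} {t0 t : ℝ} {i : I} {tr : TTrans S I O}
      {rest : List (I × ℝ)} {trs : List (TTrans S I O)} :
      tr ∈ M → tr.src = s → tr.inp = i → GuardMem tr.guard (t - t0) →
      TRunTo M tr.dst t rest trs sf →
      TRunTo M s t0 ((i, t) :: rest) (tr :: trs) sf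

/-- `α` induces the sequence of transitions `trs` from state `s`. -/
def TInduces (M : TFSM S I O) (s : S) (α : List (I × ℝ)) (trs : List (TTrans S I O)) : Prop :=
  ∃ sf : S, TRunTo M s 0 α trs sf

/-- `Dom(s)`: the timed input sequences inducing at least one sequence of transitions from `s`. -/
def TDom (M : TFSM S I O) (s : S) : Set (List (I × ℝ)) :=
  { α | IsTimedInputSeq α ∧ ∃ trs, TInduces M s α trs }

/-- `next_state(s, α) = sf` (as a relation, since `next_state` is partial). -/
def TReaches (M : TFSM S I O) (s : S) (α : List (I × ℝ)) (sf : S) : Prop :=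
  ∃ trs, TRunTo M s 0 α trs sf

/-- The timed outputs of a run: the `j`-th transition produces its output at time
`t_j + d_j`. -/
def rawOutputs (α : List (I × ℝ)) (trs : List (TTrans S I O)) : List (O × ℝ) :=
  List.zipWith (fun p tr => (tr.out, p.2 + ((tr.delay : ℕ) : ℝ))) α trs

/-- `timed_out(s, α)`: all time-sorted reorderings of the timed outputs of the run of `α` at `s`. -/
def timedOut (M : TFSM S I O) (s : S) (α : List (I × ℝ)) : Set (List (O × ℝ)) :=
  { β | ∃ trs sf, TRunTo M s 0 α trs sf ∧ List.Perm β (rawOutputs α trs) ∧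
        List.Chain' (· ≤ ·) (β.map Prod.snd) }

/-- Homing sequence for a TFSM with output delays. -/
def THoming (M : TFSM S I O) (α : List (I × ℝ)) : Prop :=
  IsTimedInputSeq α ∧ ∀ s1 s2 : S, timedOut M s1 α = timedOut M s2 α →
    ∃ sf : S, TReaches M s1 α sf ∧ TReaches M s2 α sf

/-- Synchronizing sequence for a TFSM with output delays. -/
def TSync (M : TFSM S I O) (α : List (I × ℝ)) : Prop :=
  IsTimedInputSeq α ∧ ∃ sf : S, ∀ s : S, TReaches M s α sf

/-- A timed input sequence is non-integer if the difference of any two distinct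
timestamps is not an integer. -/
def NonInteger (α : List (I × ℝ)) : Prop :=
  ∀ j k : Fin α.length, j ≠ k → ∀ z : ℤ, (α.get j).2 - (α.get k).2 ≠ (z : ℝ)

/-- A transition of an (untimed) FSM. -/
structure FTrans (S A B : Type) where
  src : S
  inp : A
  out : B
  dst : S

/-- An (untimed) FSM given by its transition relation. -/
abbrev UntimedFSM (S A B : Type) := Set (FTrans S A B)

/-- FSM run: input sequence, produced output sequence, final state. -/
inductive FRunTo (T : UntimedFSM S A B) : S → List A → List B → S → Prop
  | nil (s : S) : FRunTo T s [] [] s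
  | cons {s sf : S} {a : A} {rest : List A} {γ : List B} {f : FTrans S A B} :
      f ∈ T → f.src = s → f.inp = a → FRunTo T f.dst rest γ sf →
      FRunTo T s (a :: rest) (f.out :: γ) sf

def FReaches (T : UntimedFSM S A B) (s : S) (β : List A) (sf : S) : Prop :=
  ∃ γ, FRunTo T s β γ sf

/-- `out(s, β)` for an FSM (a set, i.e. a partial value, since the FSM may be partial). -/
def FOut (T : UntimedFSM S A B) (s : S) (β : List A) : Set (List B) :=
  { γ | ∃ sf, FRunTo T s β γ sf }

def FDeterministic (T : UntimedFSM S A B) : Prop :=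
  ∀ f ∈ T, ∀ f' ∈ T, f.src = f'.src → f.inp = f'.inp → f = f'

/-- Completeness of an FSM relative to an input alphabet `A0`. -/
def FCompleteOn (T : UntimedFSM S A B) (A0 : Set A) : Prop :=
  ∀ s : S, ∀ a ∈ A0, ∃ f ∈ T, f.src = s ∧ f.inp = a

/-- Synchronizing sequence for an FSM. -/
def FSync (T : UntimedFSM S A B) (β : List A) : Prop :=
  ∃ sf : S, ∀ s : S, FReaches T s β sf

/-- Homing sequence for an FSM. -/
def FHoming (T : UntimedFSM S A B) (β : List A) : Prop :=
  ∀ s1 s2 : S, FOut T s1 β = FOut T s2 β →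
    ∃ sf : S, FReaches T s1 β sf ∧ FReaches T s2 β sf

/-- The guards appearing on transitions labeled with input `i`. -/
def guardsOf (M : TFSM S I O) (i : I) : Set Guard :=
  { g | ∃ tr ∈ M, tr.inp = i ∧ tr.guard = g }

/-- Boundary points of the guards labeled `i`. -/
def boundaries (M : TFSM S I O) (i : I) : Set ℕ :=
  { p | ∃ g ∈ guardsOf M i, g.lo = p ∨ g.hi = p }

/-- `Ḡ_i`: the half-open intervals determined by consecutive boundary points of `G_i`. -/
def refinedGuards (M : TFSM S I O) (i : I) : Set Guard :=
  { g | g.rightClosed = false ∧ g.lo ∈ boundaries M i ∧ g.hi ∈ boundaries M i ∧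
        g.lo < g.hi ∧ ∀ r ∈ boundaries M i, ¬ (g.lo < r ∧ r < g.hi) }

/-- The abstract input alphabet `I_G = {(i, g) : g ∈ Ḡ_i}`. -/
def absInputs (M : TFSM S I O) : Set (I × Guard) :=
  { p | p.2 ∈ refinedGuards M p.1 }

/-- The region FSM `R(S)` of a TFSM with output delays. -/
def regionFSM (M : TFSM S I O) : UntimedFSM S (I × Guard) (O × ℕ+) :=
  { f | f.inp ∈ absInputs M ∧ ∃ tr ∈ M, tr.src = f.src ∧ tr.inp = f.inp.1 ∧
        tr.out = f.out.1 ∧ tr.delay = f.out.2 ∧ tr.dst = f.dst ∧ GuardSub f.inp.2 tr.guard }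

/-- All guards are half-open intervals `[u, v)` with `u < v`. -/
def HalfOpenGuards (M : TFSM S I O) : Prop :=
  ∀ tr ∈ M, tr.guard.rightClosed = false ∧ tr.guard.lo < tr.guard.hi

/-- Weak completeness: all states have the same domain. -/
def WeaklyComplete (M : TFSM S I O) : Prop :=
  ∀ s s' : S, TDom M s = TDom M s'

/-- `Projects M t0 α β`: `β` is the untimed projection `[α]_{I_G}` of `α`
(relative to previous timestamp `t0`). -/
inductive Projects (M : TFSM S I O) : ℝ → List (I × ℝ) → List (I × Guard) → Prop
  | nil (t0 : ℝ) : Projects M t0 [] []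
  | cons {t0 t : ℝ} {i : I} {g : Guard} {rest : List (I × ℝ)} {brest : List (I × Guard)} :
      g ∈ refinedGuards M i → GuardMem g (t - t0) →
      Projects M t rest brest →
      Projects M t0 ((i, t) :: rest) ((i, g) :: brest)

/-- All guards are point intervals `[u, u]` with `u` a positive integer. -/
def PointIntervals (M : TFSM S I O) : Prop :=
  ∀ tr ∈ M, tr.guard.rightClosed = true ∧ tr.guard.lo = tr.guard.hi ∧ 0 < tr.guard.lo

/-- The region FSM of a TFSM with only point intervals: abstract inputs are the
(input, guard) pairs appearing on transitions. -/
def pointRegionFSM (M : TFSM S I O) : UntimedFSM S (I × Guard) (O × ℕ+) :=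
  { f | ∃ tr ∈ M, tr.src = f.src ∧ (tr.inp, tr.guard) = f.inp ∧
        (tr.out, tr.delay) = f.out ∧ tr.dst = f.dst }

/-- `t(α)`: the last timestamp of `α` (0 for the empty sequence). -/
def tEnd (α : List (I × ℝ)) : ℝ := (α.map Prod.snd).getLastD 0

/-- The number of timed outputs of the run produced at or after time `t(α)`
(counted with multiplicity). -/
noncomputable def tailCount (α : List (I × ℝ)) (trs : List (TTrans S I O)) : ℕ :=
  ((rawOutputs α trs).filter (fun p => decide (tEnd α ≤ p.2))).length

/-- The timed output tail of a run: the multiset of `(o, τ - t(α))` over timed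
outputs `(o, τ)` of the run with `τ ≥ t(α)`. -/
noncomputable def tailOf (α : List (I × ℝ)) (trs : List (TTrans S I O)) : Multiset (O × ℝ) :=
  ↑(((rawOutputs α trs).filter (fun p => decide (tEnd α ≤ p.2))).map
      (fun p => (p.1, p.2 - tEnd α)))

/-- The set of all timed output tails of the TFSM, together with the empty tail. -/
def Tout (M : TFSM S I O) : Set (Multiset (O × ℝ)) :=
  insert 0 { m | ∃ (s : S) (α : List (I × ℝ)) (trs : List (TTrans S I O)) (sf : S),
    α ∈ TDom M s ∧ TRunTo M s 0 α trs sf ∧ m = tailOf α trs }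

/-- The output delay at state `j` of the machine `B_n`. -/
def BnDelay (n : ℕ) (j : Fin n) : ℕ+ :=
  if (j : ℕ) = n - 2 then 3 else if (j : ℕ) = n - 1 then 1 else 2

/-- The transition of `B_n` out of state `j`. -/
def BnTrans (n : ℕ) [NeZero n] (j : Fin n) : TTrans (Fin n) Unit Unit :=
  ⟨j, (), ⟨1, 1, true⟩, (), BnDelay n j, j + 1⟩

/-- The TFSM `B_n` with only point intervals. -/
def Bn (n : ℕ) [NeZero n] : TFSM (Fin n) Unit Unit := Set.range (BnTrans n)

theorem guardMem_halfOpen {g : Guard} (hg : g.rightClosed = false) (t : ℝ) :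
    GuardMem g t ↔ (g.lo : ℝ) ≤ t ∧ t < (g.hi : ℝ) := by
  simp [GuardMem, hg]

/-- A refined guard is contained in every half-open guard for the same input that it meets. -/
theorem guardSub_of_mem {M : TFSM S I O} (hho : HalfOpenGuards M) {tr : TTrans S I O}
    (htr : tr ∈ M) {g : Guard} (hg : g ∈ refinedGuards M tr.inp) {t : ℝ}
    (ht : GuardMem g t) (ht' : GuardMem tr.guard t) : GuardSub g tr.guard := by
  obtain ⟨hrc, -, -, -, hcons⟩ := hg
  have hlo : tr.guard.lo ∈ boundaries M tr.inp := ⟨tr.guard, ⟨tr, htr, rfl, rfl⟩, Or.inl rfl⟩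
  have hhi : tr.guard.hi ∈ boundaries M tr.inp := ⟨tr.guard, ⟨tr, htr, rfl, rfl⟩, Or.inr rfl⟩
  rw [guardMem_halfOpen hrc] at ht
  rw [guardMem_halfOpen (hho tr htr).1] at ht'
  have h1 : tr.guard.lo < g.hi := by exact_mod_cast ht'.1.trans_lt ht.2
  have h2 : g.lo < tr.guard.hi := by exact_mod_cast ht.1.trans_lt ht'.2
  have h3 : tr.guard.lo ≤ g.lo := by
    by_contra! h
    exact hcons _ hlo ⟨h, h1⟩
  have h4 : g.hi ≤ tr.guard.hi := by
    by_contra! h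
    exact hcons _ hhi ⟨h2, h⟩
  have h3' : (tr.guard.lo : ℝ) ≤ g.lo := by exact_mod_cast h3
  have h4' : (g.hi : ℝ) ≤ tr.guard.hi := by exact_mod_cast h4
  intro x hx
  rw [guardMem_halfOpen hrc] at hx
  rw [guardMem_halfOpen (hho tr htr).1]
  exact ⟨h3'.trans hx.1, hx.2.trans_le h4'⟩

/-- A timestamp in a guard labeled `i` lies in some refined guard of `i`. -/
theorem exists_refined {M : TFSM S I O} (hho : HalfOpenGuards M) {tr : TTrans S I O}
    (htr : tr ∈ M) {t : ℝ} (ht : GuardMem tr.guard t) :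
    ∃ g ∈ refinedGuards M tr.inp, GuardMem g t := by
  classical
  rw [guardMem_halfOpen (hho tr htr).1] at ht
  have hlo : tr.guard.lo ∈ boundaries M tr.inp := ⟨tr.guard, ⟨tr, htr, rfl, rfl⟩, Or.inl rfl⟩
  have hhi : tr.guard.hi ∈ boundaries M tr.inp := ⟨tr.guard, ⟨tr, htr, rfl, rfl⟩, Or.inr rfl⟩
  have hex : ∃ q, q ∈ boundaries M tr.inp ∧ t < (q : ℝ) := ⟨_, hhi, ht.2⟩
  let P : ℕ → Prop := fun p => p ∈ boundaries M tr.inp ∧ (p : ℝ) ≤ t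
  have hle : tr.guard.lo ≤ tr.guard.hi := (hho tr htr).2.le
  have hp : P (Nat.findGreatest P tr.guard.hi) := Nat.findGreatest_spec hle ⟨hlo, ht.1⟩
  obtain ⟨hq, hqt⟩ := Nat.find_spec hex
  refine ⟨⟨Nat.findGreatest P tr.guard.hi, Nat.find hex, false⟩, ⟨rfl, hp.1, hq, ?_, ?_⟩, ?_⟩
  · exact_mod_cast hp.2.trans_lt hqt
  · rintro r hr ⟨hpr, hrq⟩
    have hrt : (r : ℝ) ≤ t := by
      by_contra! h
      exact Nat.find_min hex hrq ⟨hr, h⟩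
    have hrhi : r ≤ tr.guard.hi := by exact_mod_cast (hrt.trans_lt ht.2).le
    exact Nat.findGreatest_is_greatest hpr hrhi ⟨hr, hrt⟩
  · exact (guardMem_halfOpen rfl t).2 ⟨hp.2, hqt⟩

theorem exists_projects_of_run {M : TFSM S I O} (hho : HalfOpenGuards M) {s sf : S} {t0 : ℝ}
    {α : List (I × ℝ)} {trs : List (TTrans S I O)} (h : TRunTo M s t0 α trs sf) :
    ∃ β, Projects M t0 α β := by
  induction h with
  | nil s t0 => exact ⟨[], .nil t0⟩
  | cons htr _ hi hg _ ih =>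
    obtain ⟨β, hβ⟩ := ih
    obtain ⟨g, hg', hgt⟩ := exists_refined hho htr hg
    exact ⟨_, .cons (hi ▸ hg') hgt hβ⟩

/-- Given the projection `β` of `α`, the TFSM on `α` and the region FSM on `β` reach the same
states. -/
theorem reaches_iff_of_projects {M : TFSM S I O} (hho : HalfOpenGuards M) {t0 : ℝ}
    {α : List (I × ℝ)} {β : List (I × Guard)} (h : Projects M t0 α β) (s sf : S) :
    (∃ trs, TRunTo M s t0 α trs sf) ↔ FReaches (regionFSM M) s β sf := by
  induction h generalizing s with
  | nil t0 =>
    constructor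
    · rintro ⟨_, h⟩
      cases h
      exact ⟨[], .nil _⟩
    · rintro ⟨_, h⟩
      cases h
      exact ⟨[], .nil _ t0⟩
  | @cons t0 t i g rest brest hg hgt _ ih =>
    constructor
    · rintro ⟨_, h⟩
      cases h with
      | @cons _ _ _ _ _ tr _ trs htr hs hi hmem hrun =>
        obtain ⟨γ, hγ⟩ := (ih tr.dst).1 ⟨trs, hrun⟩
        subst hi
        let f : FTrans S (I × Guard) (O × ℕ+) := ⟨s, (tr.inp, g), (tr.out, tr.delay), tr.dst⟩
        have hf : f ∈ regionFSM M :=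
          ⟨hg, tr, htr, hs, rfl, rfl, rfl, rfl, guardSub_of_mem hho htr hg hgt hmem⟩
        exact ⟨_, FRunTo.cons (f := f) hf rfl rfl hγ⟩
    · rintro ⟨_, h⟩
      cases h with
      | @cons _ _ _ _ γ f hf hs hi hrun =>
        obtain ⟨-, tr, htr, hsrc, hinp, -, -, hdst, hsub⟩ := hf
        rw [← hdst] at hrun
        obtain ⟨trs, htrs⟩ := (ih tr.dst).2 ⟨γ, hrun⟩
        rw [hi] at hinp hsub
        exact ⟨_, .cons htr (hsrc.trans hs) hinp (hsub _ hgt) htrs⟩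

/-- for a weakly-complete deterministic TFSM with half-open guards,
`α ∈ Dom_S(s)` iff the untimed projection `[α]_{I_G}` is defined and belongs to
`Dom_{R(S)}(s)`; moreover, in that case `next_state_S(s,α) = next_state_{R(S)}(s,[α]_{I_G})`. -/
theorem stmt6 {S I O : Type} [Fintype S] [Nonempty S] [Fintype I] [Nonempty I]
    [Fintype O] [Nonempty O]
    (M : TFSM S I O) (hfin : Set.Finite M) (hdet : TFSMDeterministic M)
    (hwc : WeaklyComplete M) (hho : HalfOpenGuards M)
    (s : S) (α : List (I × ℝ)) (hα : IsTimedInputSeq α) :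
    (α ∈ TDom M s ↔ ∃ β, Projects M 0 α β ∧ ∃ sf, FReaches (regionFSM M) s β sf) ∧
    (∀ β, Projects M 0 α β →
      ∀ sf : S, (TReaches M s α sf ↔ FReaches (regionFSM M) s β sf)) := by
  refine ⟨⟨?_, ?_⟩, fun β hβ sf => reaches_iff_of_projects hho hβ s sf⟩
  · rintro ⟨-, trs, sf, hrun⟩
    obtain ⟨β, hβ⟩ := exists_projects_of_run hho hrun
    exact ⟨β, hβ, sf, (reaches_iff_of_projects hho hβ s sf).1 ⟨trs, hrun⟩⟩
  · rintro ⟨β, hβ, sf, hsf⟩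
    obtain ⟨trs, hrun⟩ := (reaches_iff_of_projects hho hβ s sf).2 hsf
    exact ⟨hα, trs, sf, hrun⟩
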